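/- Let p and q be continuously differentiable, strictly positive probability densities on ℝⁿ, and let f: ℝⁿ → ℝ^m be measurable with each component f_i integrable with respect to both p and q. Suppose for each i ∈ {1,…,m} there is a continuously differentiable g_i: ℝⁿ → ℝⁿ solving the Stein equation (S_p g_i)(x) = f_i(x) − E_p[f_i] for all x, such that q(x)·g_i(x) → 0 as ‖x‖ → ∞, ∇·(q g_i) is Lebesgue-integrable, and ∫ q‖g_i‖₂² < ∞. Then ‖E_q[f] − E_p[f]‖₂ ≤ κ · √(F(q‖p)), where κ := √(Σ_{i=1}^m ∫ q(x)‖g_i(x)‖₂² dx) is the Stein factor of f with respect to p, q. -/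

import Mathlib

open MeasureTheory Filter Topology
open scoped RealInnerProductSpace ENNReal

/-- The divergence `∇·f` of a vector field `f : ℝⁿ → ℝⁿ`, i.e. the trace of its Jacobian. -/
noncomputable def vdiv {n : ℕ} (f : EuclideanSpace ℝ (Fin n) → EuclideanSpace ℝ (Fin n))
    (x : EuclideanSpace ℝ (Fin n)) : ℝ :=
  LinearMap.trace ℝ (EuclideanSpace ℝ (Fin n)) (fderiv ℝ f x).toLinearMap

/-- The Stein operator `(S_p g)(x) = ⟨∇ log p(x), g(x)⟩ + tr(Dg(x))`. -/
noncomputable def steinOp {n : ℕ} (p : EuclideanSpace ℝ (Fin n) → ℝ)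
    (g : EuclideanSpace ℝ (Fin n) → EuclideanSpace ℝ (Fin n))
    (x : EuclideanSpace ℝ (Fin n)) : ℝ :=
  ⟪gradient (fun y => Real.log (p y)) x, g x⟫ + vdiv g x

/-- The Fisher divergence `F(q‖p) = ∫ q(x) ‖∇ log q(x) − ∇ log p(x)‖₂² dx` (as an extended
nonnegative real, so that it is `+∞` when the integral diverges). -/
noncomputable def fisherDivL {n : ℕ} (q p : EuclideanSpace ℝ (Fin n) → ℝ) : ℝ≥0∞ :=
  ∫⁻ x, ENNReal.ofReal (q x *
    ‖gradient (fun y => Real.log (q y)) x - gradient (fun y => Real.log (p y)) x‖ ^ 2)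

lemma vdiv_smul_aux {n : ℕ} (a : EuclideanSpace ℝ (Fin n) → ℝ)
    (G : EuclideanSpace ℝ (Fin n) → EuclideanSpace ℝ (Fin n)) (x : EuclideanSpace ℝ (Fin n))
    (ha : DifferentiableAt ℝ a x) (hG : DifferentiableAt ℝ G x) :
    vdiv (fun y => a y • G y) x = a x * vdiv G x + fderiv ℝ a x (G x) := by
  unfold vdiv
  rw [fderiv_fun_smul ha hG]
  have : ((a x • fderiv ℝ G x + (fderiv ℝ a x).smulRight (G x) :
      EuclideanSpace ℝ (Fin n) →L[ℝ] EuclideanSpace ℝ (Fin n))).toLinearMap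
      = a x • (fderiv ℝ G x).toLinearMap + (fderiv ℝ a x).toLinearMap.smulRight (G x) := by
    ext; simp
  rw [this, map_add, map_smul, LinearMap.trace_smulRight]
  simp

lemma vdiv_eq_sum {n : ℕ} (G : EuclideanSpace ℝ (Fin n) → EuclideanSpace ℝ (Fin n))
    (x : EuclideanSpace ℝ (Fin n)) :
    vdiv G x = ∑ i, ⟪EuclideanSpace.basisFun (Fin n) ℝ i,
      fderiv ℝ G x (EuclideanSpace.basisFun (Fin n) ℝ i)⟫ := by
  unfold vdiv
  rw [LinearMap.trace_eq_sum_inner _ (EuclideanSpace.basisFun (Fin n) ℝ)]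
  rfl

lemma integral_vdiv_compact {n : ℕ} (G : EuclideanSpace ℝ (Fin n) → EuclideanSpace ℝ (Fin n))
    (hG : ContDiff ℝ 1 G) (hs : HasCompactSupport G) : ∫ x, vdiv G x = 0 := by
  have hI : ∀ v, Integrable (fun x => fderiv ℝ G x v) := fun v => by
    apply Continuous.integrable_of_hasCompactSupport
    · exact (hG.continuous_fderiv one_ne_zero).clm_apply continuous_const
    · exact hs.fderiv_apply ℝ v
  have h0 : ∀ v, ∫ x, fderiv ℝ G x v = 0 := fun v => by
    have := integral_smul_fderiv_eq_neg_fderiv_smul_of_integrable (𝕜 := ℝ) (μ := volume)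
      (f := fun _ : EuclideanSpace ℝ (Fin n) => (1 : ℝ)) (g := G) (v := v)
      (by simp) (by simpa using hI v)
      (by simpa using hG.continuous.integrable_of_hasCompactSupport hs)
      (by intros; fun_prop) (fun x _ => (hG.differentiable one_ne_zero) x)
    simpa using this
  simp_rw [vdiv_eq_sum]
  rw [integral_finset_sum _ (fun i _ => (hI _).const_inner _)]
  apply Finset.sum_eq_zero
  intro i _
  rw [integral_inner (hI _), h0, inner_zero_right]

lemma integral_vdiv_zero {n : ℕ} (G : EuclideanSpace ℝ (Fin n) → EuclideanSpace ℝ (Fin n))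
    (hG : ContDiff ℝ 1 G) (hGi : Integrable G) (hd : Integrable (vdiv G)) :
    ∫ x, vdiv G x = 0 := by
  let φ : ContDiffBump (0 : EuclideanSpace ℝ (Fin n)) := ⟨1, 2, one_pos, one_lt_two⟩
  have hφ : ContDiff ℝ 1 (φ : EuclideanSpace ℝ (Fin n) → ℝ) := φ.contDiff
  obtain ⟨C, hC⟩ := (hφ.continuous_fderiv one_ne_zero).bounded_above_of_compact_support
    (φ.hasCompactSupport.fderiv ℝ)
  let c : ℕ → ℝ := fun k => 1 / ((k : ℝ) + 1)
  have hc0 : ∀ k, 0 < c k := fun k => by positivity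
  have hc : Tendsto c atTop (𝓝 0) := tendsto_one_div_add_atTop_nhds_zero_nat
  let χ : ℕ → EuclideanSpace ℝ (Fin n) → ℝ := fun k x => φ (c k • x)
  have hχ : ∀ k, ContDiff ℝ 1 (χ k) := fun k => hφ.comp (contDiff_const_smul (c k))
  have hχs : ∀ k, HasCompactSupport (χ k) := fun k =>
    φ.hasCompactSupport.comp_smul (hc0 k).ne'
  have hfd : ∀ k x v, fderiv ℝ (χ k) x v = c k * fderiv ℝ φ (c k • x) v := by
    intro k x v
    have h1 : HasFDerivAt (fun y : EuclideanSpace ℝ (Fin n) => c k • y)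
      (c k • ContinuousLinearMap.id ℝ (EuclideanSpace ℝ (Fin n))) x := (hasFDerivAt_id x).const_smul (c k)
    have h2 := ((hφ.differentiable one_ne_zero) (c k • x)).hasFDerivAt.comp x h1
    have h3 : fderiv ℝ (χ k) x = _ := h2.fderiv
    rw [h3]; simp
  have hbd : ∀ k x, ‖χ k x * vdiv G x‖ ≤ ‖vdiv G x‖ := fun k x => by
    rw [norm_mul, Real.norm_of_nonneg φ.nonneg]
    exact mul_le_of_le_one_left (norm_nonneg _) φ.le_one
  have hI1 : ∀ k, Integrable (fun x => χ k x * vdiv G x) := fun k =>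
    hd.mono ((hχ k).continuous.aestronglyMeasurable.mul hd.1) (Eventually.of_forall (hbd k))
  have hI2b : ∀ k x, ‖fderiv ℝ (χ k) x (G x)‖ ≤ c k * (C * ‖G x‖) := fun k x => by
    rw [hfd, norm_mul, Real.norm_of_nonneg (hc0 k).le]
    refine mul_le_mul_of_nonneg_left ?_ (hc0 k).le
    exact (ContinuousLinearMap.le_opNorm _ _).trans
      (mul_le_mul_of_nonneg_right (hC _) (norm_nonneg _))
  have hI2 : ∀ k, Integrable (fun x => fderiv ℝ (χ k) x (G x)) := fun k =>
    ((hGi.norm.const_mul C).const_mul (c k)).mono'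
      ((((hχ k).continuous_fderiv one_ne_zero).clm_apply hG.continuous).aestronglyMeasurable)
      (Eventually.of_forall (hI2b k))
  have key : ∀ k, ∫ x, χ k x * vdiv G x = - ∫ x, fderiv ℝ (χ k) x (G x) := fun k => by
    have h := integral_vdiv_compact (fun x => χ k x • G x) ((hχ k).smul hG) ((hχs k).smul_right)
    have h2 : ∀ x, vdiv (fun x => χ k x • G x) x = χ k x * vdiv G x + fderiv ℝ (χ k) x (G x) :=
      fun x => vdiv_smul_aux _ _ _ ((hχ k).differentiable one_ne_zero x)
        (hG.differentiable one_ne_zero x)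
    simp_rw [h2] at h
    rw [integral_add (hI1 k) (hI2 k)] at h
    linarith
  have lim1 : Tendsto (fun k => ∫ x, χ k x * vdiv G x) atTop (𝓝 (∫ x, vdiv G x)) := by
    refine tendsto_integral_of_dominated_convergence (fun x => ‖vdiv G x‖)
      (fun k => (hI1 k).1) hd.norm (fun k => Eventually.of_forall (hbd k))
      (Eventually.of_forall fun x => ?_)
    have h1 : Tendsto (fun k => c k • x) atTop (𝓝 0) := by
      simpa using hc.smul_const x
    have h2 : Tendsto (fun k => χ k x) atTop (𝓝 (φ 0)) :=
      (hφ.continuous.tendsto 0).comp h1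
    have h3 : φ 0 = 1 := φ.one_of_mem_closedBall (by simp [φ])
    rw [h3] at h2
    simpa using h2.mul_const (vdiv G x)
  have lim2 : Tendsto (fun k => ∫ x, χ k x * vdiv G x) atTop (𝓝 0) := by
    have hb : ∀ k, ‖∫ x, χ k x * vdiv G x‖ ≤ c k * ∫ x, C * ‖G x‖ := fun k => by
      rw [key, norm_neg, ← integral_const_mul]
      exact norm_integral_le_of_norm_le ((hGi.norm.const_mul C).const_mul (c k))
        (Eventually.of_forall (hI2b k))
    refine squeeze_zero_norm hb ?_
    simpa using hc.mul_const (∫ x, C * ‖G x‖)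
  exact tendsto_nhds_unique lim1 lim2

lemma lintegral_cs {α : Type*} [MeasurableSpace α] (μ : Measure α) (u v : α → ℝ≥0∞)
    (hu : AEMeasurable u μ) (hv : AEMeasurable v μ) :
    (∫⁻ x, u x * v x ∂μ) ^ 2 ≤ (∫⁻ x, u x ^ 2 ∂μ) * ∫⁻ x, v x ^ 2 ∂μ := by
  have h := ENNReal.lintegral_mul_le_Lp_mul_Lq μ Real.HolderConjugate.two_two hu hv
  simp only [Pi.mul_apply, ENNReal.rpow_ofNat] at h
  calc _ ≤ _ := pow_le_pow_left' h 2
    _ = _ := by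
      rw [mul_pow, ← ENNReal.rpow_natCast, ← ENNReal.rpow_natCast, ← ENNReal.rpow_mul,
        ← ENNReal.rpow_mul]
      norm_num

lemma fderiv_eq_mul_log_gradient {n : ℕ} (q : EuclideanSpace ℝ (Fin n) → ℝ)
    (x v : EuclideanSpace ℝ (Fin n)) (hq : DifferentiableAt ℝ q x) (h0 : 0 < q x) :
    fderiv ℝ q x v = q x * ⟪gradient (fun y => Real.log (q y)) x, v⟫ := by
  have h1 : ⟪gradient (fun y => Real.log (q y)) x, v⟫ =
      fderiv ℝ (fun y => Real.log (q y)) x v := by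
    rw [← toDual_gradient]; rfl
  rw [h1, fderiv.log hq h0.ne']
  simp [h0.ne']

lemma gradient_log_continuous {n : ℕ} (q : EuclideanSpace ℝ (Fin n) → ℝ)
    (hq : ContDiff ℝ 1 q) (h0 : ∀ x, 0 < q x) :
    Continuous (gradient (fun y => Real.log (q y))) := by
  have h : ContDiff ℝ 1 (fun y => Real.log (q y)) := hq.log (fun x => (h0 x).ne')
  exact (InnerProductSpace.toDual ℝ _).symm.continuous.comp (h.continuous_fderiv one_ne_zero)

/-- The one-component estimate. -/
lemma component_bound {n : ℕ}
    (p q : EuclideanSpace ℝ (Fin n) → ℝ)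
    (f : EuclideanSpace ℝ (Fin n) → ℝ) (c : ℝ)
    (g : EuclideanSpace ℝ (Fin n) → EuclideanSpace ℝ (Fin n))
    (hp : ContDiff ℝ 1 p) (hppos : ∀ x, 0 < p x)
    (hq : ContDiff ℝ 1 q) (hqpos : ∀ x, 0 < q x) (hqnorm : ∫ x, q x = 1)
    (hfq : Integrable (fun x => q x * f x))
    (hgC : ContDiff ℝ 1 g)
    (hstein : ∀ x, steinOp p g x = f x - c)
    (hdiv : Integrable (vdiv fun x => q x • g x))
    (hg2 : Integrable (fun x => q x * ‖g x‖ ^ 2)) :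
    ‖(∫ x, q x * f x) - c‖ₑ ^ 2 ≤ ENNReal.ofReal (∫ x, q x * ‖g x‖ ^ 2) * fisherDivL q p := by
  have hqi : Integrable q := by
    by_contra h
    rw [integral_undef h] at hqnorm
    exact zero_ne_one hqnorm
  have hGi : Integrable (fun x => q x • g x) := by
    refine (hqi.add hg2).mono' (hq.continuous.smul hgC.continuous).aestronglyMeasurable
      (Eventually.of_forall fun x => ?_)
    rw [norm_smul, Real.norm_of_nonneg (hqpos x).le]
    simp only [Pi.add_apply]
    have := hqpos x
    nlinarith [mul_nonneg this.le (sq_nonneg (‖g x‖ - 1)), mul_nonneg this.le (sq_nonneg (‖g x‖))]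
  have hzero : ∫ x, vdiv (fun x => q x • g x) x = 0 := integral_vdiv_zero _ (hq.smul hgC) hGi hdiv
  set sq := gradient (fun y => Real.log (q y)) with hsq
  set sp := gradient (fun y => Real.log (p y)) with hsp
  have hcq : Continuous sq := gradient_log_continuous q hq hqpos
  have hcp : Continuous sp := gradient_log_continuous p hp hppos
  have hpt : ∀ x, q x * f x - c * q x - vdiv (fun x => q x • g x) x
      = - (q x * ⟪sq x - sp x, g x⟫) := fun x => by
    have h1 := hstein x
    unfold steinOp at h1
    rw [vdiv_smul_aux _ _ _ (hq.differentiable one_ne_zero x) (hgC.differentiable one_ne_zero x),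
      fderiv_eq_mul_log_gradient q x _ (hq.differentiable one_ne_zero x) (hqpos x),
      inner_sub_left]
    have h2 : f x = ⟪sp x, g x⟫ + vdiv g x + c := by rw [h1]; ring
    rw [h2]; ring
  have heq : (∫ x, q x * f x) - c = ∫ x, - (q x * ⟪sq x - sp x, g x⟫) := by
    simp_rw [← hpt]
    have hI : Integrable (fun x => q x * f x - c * q x) := hfq.sub (hqi.const_mul c)
    rw [integral_sub hI hdiv, integral_sub hfq (hqi.const_mul c),
      integral_const_mul, hqnorm, hzero]
    ring
  let u : EuclideanSpace ℝ (Fin n) → ℝ≥0∞ := fun x => ENNReal.ofReal (√(q x) * ‖g x‖)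
  let v : EuclideanSpace ℝ (Fin n) → ℝ≥0∞ := fun x => ENNReal.ofReal (√(q x) * ‖sq x - sp x‖)
  have hu : Measurable u := ((hq.continuous.sqrt.mul hgC.continuous.norm).measurable).ennreal_ofReal
  have hv : Measurable v :=
    ((hq.continuous.sqrt.mul (hcq.sub hcp).norm).measurable).ennreal_ofReal
  have hle : ‖(∫ x, q x * f x) - c‖ₑ ≤ ∫⁻ x, u x * v x := by
    rw [heq]
    refine (enorm_integral_le_lintegral_enorm _).trans (lintegral_mono fun x => ?_)
    rw [enorm_neg, ← ENNReal.ofReal_mul (by positivity), ← ofReal_norm_eq_enorm]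
    apply ENNReal.ofReal_le_ofReal
    rw [norm_mul, Real.norm_of_nonneg (hqpos x).le]
    calc q x * ‖⟪sq x - sp x, g x⟫‖ ≤ q x * (‖sq x - sp x‖ * ‖g x‖) :=
          mul_le_mul_of_nonneg_left (norm_inner_le_norm _ _) (hqpos x).le
      _ = (√(q x) * √(q x)) * (‖sq x - sp x‖ * ‖g x‖) := by rw [Real.mul_self_sqrt (hqpos x).le]
      _ = _ := by ring
  refine (pow_le_pow_left' hle 2).trans ((lintegral_cs _ u v hu.aemeasurable hv.aemeasurable).trans
    (le_of_eq ?_))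
  congr 1
  · rw [ofReal_integral_eq_lintegral_ofReal hg2
      (Eventually.of_forall fun x => mul_nonneg (hqpos x).le (sq_nonneg _))]
    refine lintegral_congr fun x => ?_
    rw [← ENNReal.ofReal_pow (by positivity), mul_pow, Real.sq_sqrt (hqpos x).le]
  · unfold fisherDivL
    refine lintegral_congr fun x => ?_
    rw [← ENNReal.ofReal_pow (by positivity), mul_pow, Real.sq_sqrt (hqpos x).le]

/-- If `p, q` are `C¹` strictly positive probability densities on `ℝⁿ`, `f : ℝⁿ → ℝ^m` is
measurable with each component integrable w.r.t. both `p` and `q`, and each component `f_i`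
admits a `C¹` Stein solution `g i` w.r.t. `p` with `q·(g i) → 0` at infinity, `∇·(q (g i))`
integrable, and `∫ q‖g i‖² < ∞`, then
`‖E_q[f] − E_p[f]‖₂ ≤ κ · √(F(q‖p))` where `κ = √(Σᵢ ∫ q‖g i‖²)` is the Stein factor. -/
theorem bias_le_steinFactor_sqrt_fisher {n m : ℕ}
    (p q : EuclideanSpace ℝ (Fin n) → ℝ)
    (f : EuclideanSpace ℝ (Fin n) → EuclideanSpace ℝ (Fin m))
    (g : Fin m → EuclideanSpace ℝ (Fin n) → EuclideanSpace ℝ (Fin n))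
    (hp : ContDiff ℝ 1 p) (hppos : ∀ x, 0 < p x) (hpnorm : ∫ x, p x = 1)
    (hq : ContDiff ℝ 1 q) (hqpos : ∀ x, 0 < q x) (hqnorm : ∫ x, q x = 1)
    (hf : Measurable f)
    (hfp : ∀ i, Integrable (fun x => p x * f x i))
    (hfq : ∀ i, Integrable (fun x => q x * f x i))
    (hgC : ∀ i, ContDiff ℝ 1 (g i))
    (hstein : ∀ i x, steinOp p (g i) x = f x i - ∫ y, p y * f y i)
    (hdecay : ∀ i, Tendsto (fun x => q x • g i x)
      (cocompact (EuclideanSpace ℝ (Fin n))) (𝓝 0))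
    (hdiv : ∀ i, Integrable (vdiv fun x => q x • g i x))
    (hg2 : ∀ i, Integrable (fun x => q x * ‖g i x‖ ^ 2)) :
    (‖(∫ x, q x • f x) - ∫ x, p x • f x‖₊ : ℝ≥0∞)
      ≤ ENNReal.ofReal (Real.sqrt (∑ i, ∫ x, q x * ‖g i x‖ ^ 2)) *
        (fisherDivL q p) ^ (2⁻¹ : ℝ) := by
  have hfq' : ∀ i, Integrable (fun x => (q x • f x) i) := fun i => by simpa using hfq i
  have hfp' : ∀ i, Integrable (fun x => (p x • f x) i) := fun i => by simpa using hfp i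
  set b := (∫ x, q x • f x) - ∫ x, p x • f x with hb
  have hbi : ∀ i, b i = (∫ x, q x * f x i) - ∫ y, p y * f y i := fun i => by
    rw [hb, PiLp.sub_apply, eval_integral_piLp hfq', eval_integral_piLp hfp']
    simp
  have hsq : ‖b‖ₑ ^ 2 ≤ ENNReal.ofReal (∑ i, ∫ x, q x * ‖g i x‖ ^ 2) * fisherDivL q p := by
    rw [ENNReal.ofReal_sum_of_nonneg (fun i _ => integral_nonneg fun x =>
      mul_nonneg (hqpos x).le (sq_nonneg _)), Finset.sum_mul]
    rw [← ofReal_norm_eq_enorm, ← ENNReal.ofReal_pow (norm_nonneg _), EuclideanSpace.norm_sq_eq,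
      ENNReal.ofReal_sum_of_nonneg (fun i _ => sq_nonneg _)]
    refine Finset.sum_le_sum fun i _ => ?_
    rw [ENNReal.ofReal_pow (norm_nonneg _), ofReal_norm_eq_enorm, hbi]
    exact component_bound p q (fun x => f x i) _ (g i) hp hppos hq hqpos hqnorm (hfq i) (hgC i)
      (hstein i) (hdiv i) (hg2 i)
  have h := ENNReal.rpow_le_rpow hsq (show (0 : ℝ) ≤ 2⁻¹ by norm_num)
  rw [ENNReal.mul_rpow_of_nonneg _ _ (by norm_num), ← ENNReal.rpow_natCast,
    ← ENNReal.rpow_mul] at h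
  rw [Real.sqrt_eq_rpow, ← ENNReal.ofReal_rpow_of_nonneg (Finset.sum_nonneg fun i _ =>
    integral_nonneg fun x => mul_nonneg (hqpos x).le (sq_nonneg _)) (by norm_num)]
  norm_num at h ⊢
  exact h
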